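/- Assume Assumptions RS and QM, and let (y_t)_{t∈ℕ} be the mode estimate sequence obtained by the MS iteration starting from y₁ with f(y₁) > 0. Then there exists a constant ā > 0 such that the sufficient-increase condition f(y_{t+1}) − f(y_t) ≥ ā·‖y_{t+1} − y_t‖² holds for every t ∈ ℕ; moreover one can take ā = C/(2 n h^{d+2}) where C > 0 is any constant with f̌(y_t) ≥ C/(n h^d) for all t. -/

import Mathlib

open Set Filter Topology MeasureTheory
open scoped BigOperators RealInnerProductSpace

noncomputable section

/-- Euclidean space `ℝ^d`. -/
abbrev Euc (d : ℕ) := EuclideanSpace ℝ (Fin d)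

/-- The convex subdifferential of a function `g` (viewed as a function on `[0,∞)`) at `u`. -/
def subdiffIci (g : ℝ → ℝ) (u : ℝ) : Set ℝ :=
  {c : ℝ | ∀ v ∈ Set.Ici (0:ℝ), g v - g u ≥ c * (v - u)}

/-- Assumption RS: the kernel `K` is bounded, continuous, non-negative, normalized, and
radially symmetric with profile `Khat`. -/
structure AssumptionRS (d : ℕ) (K : Euc d → ℝ) (Khat : ℝ → ℝ) : Prop where
  bounded : ∃ M : ℝ, ∀ x, K x ≤ M
  cont : Continuous K
  nonneg : ∀ x, 0 ≤ K x
  normalized : ∫ x, K x = 1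
  radial : ∀ x, K x = Khat (‖x‖ ^ 2 / 2)

/-- Assumption QM for the profile `Khat`, together with the selection `Kcheck`:
`Khat` is convex and non-increasing on `[0,∞)`, its right derivative at `0` exists as a real
number and equals `-(Kcheck 0)` (i.e. `Kcheck 0 = -Khat'(0+) > -∞`), and for every `u > 0`,
`-(Kcheck u)` belongs to the subdifferential of `Khat` at `u`. -/
structure AssumptionQM (Khat Kcheck : ℝ → ℝ) : Prop where
  convexOn : ConvexOn ℝ (Set.Ici (0:ℝ)) Khat
  antitoneOn : AntitoneOn Khat (Set.Ici (0:ℝ))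
  rderiv0 : Filter.Tendsto (fun v => (Khat v - Khat 0) / v)
      (nhdsWithin 0 (Set.Ioi 0)) (nhds (-(Kcheck 0)))
  subdiff : ∀ u : ℝ, 0 < u → -(Kcheck u) ∈ subdiffIci Khat u

/-- The kernel density estimate `f(y) = (1/(n hᵈ)) ∑ᵢ K((y - xᵢ)/h)`. -/
def KDE (d n : ℕ) (K : Euc d → ℝ) (x : Fin n → Euc d) (h : ℝ) (y : Euc d) : ℝ :=
  (1 / ((n : ℝ) * h ^ d)) * ∑ i : Fin n, K (h⁻¹ • (y - x i))

/-- `f̌(y) = (1/(n hᵈ)) ∑ᵢ Ǩ(‖(y - xᵢ)/h‖²/2)`. -/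
def fcheck (d n : ℕ) (Kcheck : ℝ → ℝ) (x : Fin n → Euc d) (h : ℝ) (y : Euc d) : ℝ :=
  (1 / ((n : ℝ) * h ^ d)) * ∑ i : Fin n, Kcheck (‖h⁻¹ • (y - x i)‖ ^ 2 / 2)

/-- The mean shift vector `m(y)`: zero if `f̌(y) = 0`, and otherwise
`m(y) = ∑ᵢ Ǩ(‖(y - xᵢ)/h‖²/2)(xᵢ - y) / ∑ᵢ Ǩ(‖(y - xᵢ)/h‖²/2)`. -/
def msMap (d n : ℕ) (Kcheck : ℝ → ℝ) (x : Fin n → Euc d) (h : ℝ) (y : Euc d) : Euc d :=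
  if fcheck d n Kcheck x h y = 0 then 0
  else (∑ i : Fin n, Kcheck (‖h⁻¹ • (y - x i)‖ ^ 2 / 2))⁻¹ •
    ∑ i : Fin n, Kcheck (‖h⁻¹ • (y - x i)‖ ^ 2 / 2) • (x i - y)

/-- `y` is a mean shift iteration sequence: `y (t+1) = y t + m (y t)` for all `t`. -/
def MSSeq (d n : ℕ) (Kcheck : ℝ → ℝ) (x : Fin n → Euc d) (h : ℝ) (y : ℕ → Euc d) : Prop :=
  ∀ t : ℕ, y (t + 1) = y t + msMap d n Kcheck x h (y t)

/-- `f` has the Łojasiewicz property on the set `S`. -/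
def LojasiewiczOn (d : ℕ) (f : Euc d → ℝ) (S : Set (Euc d)) : Prop :=
  ∃ ε > (0:ℝ), ∃ c > (0:ℝ), ∃ θ ∈ Set.Ico (0:ℝ) 1,
    ∀ x' ∈ S, ∀ x ∈ S, ‖x' - x‖ < ε → 0 ≤ f x' - f x →
      ‖gradient f x‖ ≥ c * (f x' - f x) ^ θ

/-- `f` satisfies the Łojasiewicz inequality at `ybar` with exponent `θ`, on the set `S`. -/
def LojasiewiczAtWith (d : ℕ) (f : Euc d → ℝ) (S : Set (Euc d)) (ybar : Euc d) (θ : ℝ) : Prop :=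
  ∃ ε > (0:ℝ), ∃ c > (0:ℝ),
    ∀ y ∈ S, ‖ybar - y‖ < ε → 0 ≤ f ybar - f y →
      ‖gradient f y‖ ≥ c * (f ybar - f y) ^ θ

/-!
A subgradient inequality at each data point, summed against the identity that defines the mean
shift vector, gives the one-step bound
`f (y + m y) - f y ≥ f̌ y / (2 h²) * ‖m y‖²`,
so it remains to bound `f̌ (y t)` below by a positive constant.

If `y 1 = y 0`, the sequence is constant. Otherwise `f̌ (y 0) > 0` and `f (y 1) > f (y 0)`, and the
bound comes from comparing `y t` with the starting point: averaging the subgradient inequality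
over all pairs of data points gives `f y - f z ≤ f̌ y * V z`, where `V z` is the mean of
`‖(z - xᵢ)/h‖²/2`, so that `f̌ (y t) ≥ (f (y 1) - f (y 0)) / V (y 0)` for `t ≥ 1`.
-/

section Subdifferential

variable {g : ℝ → ℝ} {c u : ℝ}

lemma mem_subdiffIci_zero_of_tendsto (hg : ConvexOn ℝ (Ici 0) g)
    (hc : Tendsto (fun v => (g v - g 0) / v) (𝓝[>] 0) (𝓝 c)) : c ∈ subdiffIci g 0 := by
  intro v hv
  rcases (mem_Ici.1 hv).eq_or_lt with rfl | hv_pos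
  · simp
  have hderiv : HasDerivWithinAt g c (Ioi 0) 0 := by
    rw [hasDerivWithinAt_iff_tendsto_slope' self_notMem_Ioi, slope_fun_def_field]
    simpa only [sub_zero] using hc
  have hslope := hg.le_slope_of_hasDerivWithinAt_Ioi self_mem_Ici hv hv_pos hderiv
  rwa [slope_def_field, le_div_iff₀ (sub_pos.2 hv_pos)] at hslope

lemma nonpos_of_mem_subdiffIci (hg : AntitoneOn g (Ici 0)) (hu : 0 ≤ u)
    (hc : c ∈ subdiffIci g u) : c ≤ 0 := by
  have hu' : u + 1 ∈ Ici (0 : ℝ) := add_nonneg hu zero_le_one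
  have hsub := hc (u + 1) hu'
  have hanti := hg hu hu' (le_add_of_nonneg_right zero_le_one)
  linarith

end Subdifferential

namespace AssumptionQM

variable {ι : Type*} [Fintype ι] {Khat Kcheck : ℝ → ℝ}

lemma neg_mem_subdiffIci (hQM : AssumptionQM Khat Kcheck) {u : ℝ} (hu : 0 ≤ u) :
    -Kcheck u ∈ subdiffIci Khat u := by
  rcases hu.eq_or_lt with rfl | hu_pos
  · exact mem_subdiffIci_zero_of_tendsto hQM.convexOn hQM.rderiv0
  · exact hQM.subdiff u hu_pos

lemma Kcheck_nonneg (hQM : AssumptionQM Khat Kcheck) {u : ℝ} (hu : 0 ≤ u) : 0 ≤ Kcheck u :=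
  neg_nonpos.1 (nonpos_of_mem_subdiffIci hQM.antitoneOn hu (hQM.neg_mem_subdiffIci hu))

lemma Kcheck_mul_sub_le (hQM : AssumptionQM Khat Kcheck) {u v : ℝ} (hu : 0 ≤ u) (hv : 0 ≤ v) :
    Kcheck u * (u - v) ≤ Khat v - Khat u := by
  linarith [hQM.neg_mem_subdiffIci hu v hv]

lemma card_mul_sum_sub_sum_le (hQM : AssumptionQM Khat Kcheck) {u v : ι → ℝ}
    (hu : ∀ i, 0 ≤ u i) (hv : ∀ i, 0 ≤ v i) :
    Fintype.card ι * (∑ i, Khat (u i) - ∑ j, Khat (v j)) ≤ (∑ i, Kcheck (u i)) * ∑ j, v j := by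
  have hpair (i j : ι) : Khat (u i) - Khat (v j) ≤ Kcheck (u i) * v j := by
    linarith [hQM.Kcheck_mul_sub_le (hu i) (hv j), mul_nonneg (hQM.Kcheck_nonneg (hu i)) (hu i)]
  calc Fintype.card ι * (∑ i, Khat (u i) - ∑ j, Khat (v j))
      = ∑ i, ∑ j, (Khat (u i) - Khat (v j)) := by
        simp only [Finset.sum_sub_distrib, Finset.sum_const, Finset.card_univ, nsmul_eq_mul,
          ← Finset.mul_sum, mul_sub]
    _ ≤ ∑ i, ∑ j, Kcheck (u i) * v j :=
        Finset.sum_le_sum fun i _ => Finset.sum_le_sum fun j _ => hpair i j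
    _ = (∑ i, Kcheck (u i)) * ∑ j, v j := (Finset.sum_mul_sum ..).symm

end AssumptionQM

section HalfSqDist

/-- The scaled half squared distance `‖(y - a)/h‖²/2`, the argument at which the profile of a
radially symmetric kernel centred at `a` is evaluated. -/
def halfSqDist {E : Type*} [SeminormedAddCommGroup E] [NormedSpace ℝ E] (h : ℝ) (a y : E) : ℝ :=
  ‖h⁻¹ • (y - a)‖ ^ 2 / 2

lemma halfSqDist_nonneg {E : Type*} [SeminormedAddCommGroup E] [NormedSpace ℝ E] (h : ℝ) (a y : E) :
    0 ≤ halfSqDist h a y := by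
  unfold halfSqDist
  positivity

variable {E : Type*} [SeminormedAddCommGroup E] [InnerProductSpace ℝ E]

lemma halfSqDist_sub_halfSqDist_add (h : ℝ) (a z m : E) :
    halfSqDist h a z - halfSqDist h a (z + m) =
      (2 * ⟪a - z, m⟫ - ‖m‖ ^ 2) / (2 * h ^ 2) := by
  have hexpand : ‖z + m - a‖ ^ 2 = ‖z - a‖ ^ 2 - 2 * ⟪a - z, m⟫ + ‖m‖ ^ 2 := by
    rw [show z + m - a = m - (a - z) by abel, norm_sub_sq_real, real_inner_comm, norm_sub_rev a z]
    ring
  simp only [halfSqDist, norm_smul, mul_pow, norm_inv, inv_pow, Real.norm_eq_abs, sq_abs, hexpand]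
  ring

lemma sum_mul_halfSqDist_sub {ι : Type*} [Fintype ι] (h : ℝ) {w : ι → ℝ} {a : ι → E} {z m : E}
    (hm : ∑ i, w i • (a i - z) = (∑ i, w i) • m) :
    ∑ i, w i * (halfSqDist h (a i) z - halfSqDist h (a i) (z + m)) =
      (∑ i, w i) * ‖m‖ ^ 2 / (2 * h ^ 2) := by
  have hinner : ∑ i, w i * ⟪a i - z, m⟫ = (∑ i, w i) * ‖m‖ ^ 2 := by
    simpa only [sum_inner, real_inner_smul_left, real_inner_self_eq_norm_sq]
      using congrArg (⟪·, m⟫) hm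
  calc ∑ i, w i * (halfSqDist h (a i) z - halfSqDist h (a i) (z + m))
      = ∑ i, (2 * (w i * ⟪a i - z, m⟫) - w i * ‖m‖ ^ 2) / (2 * h ^ 2) :=
        Finset.sum_congr rfl fun i _ => by rw [halfSqDist_sub_halfSqDist_add]; ring
    _ = (2 * ∑ i, w i * ⟪a i - z, m⟫ - (∑ i, w i) * ‖m‖ ^ 2) / (2 * h ^ 2) := by
        rw [← Finset.sum_div, Finset.sum_sub_distrib, ← Finset.mul_sum, ← Finset.sum_mul]
    _ = (∑ i, w i) * ‖m‖ ^ 2 / (2 * h ^ 2) := by rw [hinner]; ring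

end HalfSqDist

section MeanShift

variable {d n : ℕ} {K : Euc d → ℝ} {Khat Kcheck : ℝ → ℝ} {x : Fin n → Euc d} {h : ℝ}

lemma fcheck_nonneg (hQM : AssumptionQM Khat Kcheck) (hh : 0 < h) (z : Euc d) :
    0 ≤ fcheck d n Kcheck x h z :=
  mul_nonneg (by positivity) (Finset.sum_nonneg fun _ _ => hQM.Kcheck_nonneg (by positivity))

lemma msMap_of_fcheck_eq_zero {z : Euc d} (hz : fcheck d n Kcheck x h z = 0) :
    msMap d n Kcheck x h z = 0 :=
  if_pos hz

lemma sum_smul_sub_eq_smul_msMap {z : Euc d} (hz : fcheck d n Kcheck x h z ≠ 0) :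
    ∑ i, Kcheck (halfSqDist h (x i) z) • (x i - z) =
      (∑ i, Kcheck (halfSqDist h (x i) z)) • msMap d n Kcheck x h z := by
  rw [msMap, if_neg hz]
  exact (smul_inv_smul₀ (right_ne_zero_of_mul hz) _).symm

lemma KDE_sub_KDE (hK : ∀ v, K v = Khat (‖v‖ ^ 2 / 2)) (y z : Euc d) :
    KDE d n K x h y - KDE d n K x h z = 1 / (n * h ^ d) *
      (∑ i, Khat (halfSqDist h (x i) y) - ∑ i, Khat (halfSqDist h (x i) z)) := by
  simp only [KDE, hK, halfSqDist, mul_sub]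

theorem fcheck_mul_norm_msMap_sq_le (hK : ∀ v, K v = Khat (‖v‖ ^ 2 / 2))
    (hQM : AssumptionQM Khat Kcheck) (hh : 0 < h) (z : Euc d) :
    fcheck d n Kcheck x h z / (2 * h ^ 2) * ‖msMap d n Kcheck x h z‖ ^ 2 ≤
      KDE d n K x h (z + msMap d n Kcheck x h z) - KDE d n K x h z := by
  by_cases hz : fcheck d n Kcheck x h z = 0
  · simp [msMap_of_fcheck_eq_zero hz]
  set m := msMap d n Kcheck x h z
  let w (i : Fin n) : ℝ := Kcheck (halfSqDist h (x i) z)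
  calc fcheck d n Kcheck x h z / (2 * h ^ 2) * ‖m‖ ^ 2
      = 1 / (n * h ^ d) * ((∑ i, w i) * ‖m‖ ^ 2 / (2 * h ^ 2)) := by
        simp only [fcheck, w, halfSqDist]; ring
    _ = 1 / (n * h ^ d) *
          ∑ i, w i * (halfSqDist h (x i) z - halfSqDist h (x i) (z + m)) := by
        rw [sum_mul_halfSqDist_sub h (sum_smul_sub_eq_smul_msMap hz)]
    _ ≤ 1 / (n * h ^ d) *
          ∑ i, (Khat (halfSqDist h (x i) (z + m)) - Khat (halfSqDist h (x i) z)) := by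
        gcongr
        exact hQM.Kcheck_mul_sub_le (halfSqDist_nonneg ..) (halfSqDist_nonneg ..)
    _ = KDE d n K x h (z + m) - KDE d n K x h z := by
        rw [KDE_sub_KDE hK, Finset.sum_sub_distrib]

theorem KDE_sub_KDE_le_fcheck_mul (hn : 0 < n) (hK : ∀ v, K v = Khat (‖v‖ ^ 2 / 2))
    (hQM : AssumptionQM Khat Kcheck) (hh : 0 < h) (y z : Euc d) :
    KDE d n K x h y - KDE d n K x h z ≤
      fcheck d n Kcheck x h y * ((∑ i, halfSqDist h (x i) z) / n) := by
  have hsum := hQM.card_mul_sum_sub_sum_le (fun i => halfSqDist_nonneg h (x i) y)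
    (fun i => halfSqDist_nonneg h (x i) z)
  rw [Fintype.card_fin] at hsum
  calc KDE d n K x h y - KDE d n K x h z
      = 1 / (n * h ^ d) / n *
          (n * (∑ i, Khat (halfSqDist h (x i) y) - ∑ i, Khat (halfSqDist h (x i) z))) := by
        rw [KDE_sub_KDE hK]; field_simp
    _ ≤ 1 / (n * h ^ d) / n *
          ((∑ i, Kcheck (halfSqDist h (x i) y)) * ∑ i, halfSqDist h (x i) z) := by
        gcongr
    _ = fcheck d n Kcheck x h y * ((∑ i, halfSqDist h (x i) z) / n) := by
        simp only [fcheck, halfSqDist]; ring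

namespace MSSeq

variable {y : ℕ → Euc d}

lemma sub_eq_msMap (hy : MSSeq d n Kcheck x h y) (t : ℕ) :
    y (t + 1) - y t = msMap d n Kcheck x h (y t) :=
  sub_eq_of_eq_add' (hy t)

lemma apply_eq_apply_zero (hy : MSSeq d n Kcheck x h y) (h01 : y 1 = y 0) (t : ℕ) :
    y t = y 0 := by
  induction t with
  | zero => rfl
  | succ t ih => rw [hy t, ih, ← hy 0, h01]

lemma mul_norm_sub_sq_le (hy : MSSeq d n Kcheck x h y) (hK : ∀ v, K v = Khat (‖v‖ ^ 2 / 2))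
    (hQM : AssumptionQM Khat Kcheck) (hh : 0 < h) {c : ℝ} {t : ℕ}
    (hc : c ≤ fcheck d n Kcheck x h (y t)) :
    c / (2 * h ^ 2) * ‖y (t + 1) - y t‖ ^ 2 ≤
      KDE d n K x h (y (t + 1)) - KDE d n K x h (y t) := by
  have hstep := fcheck_mul_norm_msMap_sq_le (x := x) hK hQM hh (y t)
  rw [← hy t, ← hy.sub_eq_msMap t] at hstep
  refine le_trans ?_ hstep
  gcongr

lemma monotone_KDE (hy : MSSeq d n Kcheck x h y) (hK : ∀ v, K v = Khat (‖v‖ ^ 2 / 2))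
    (hQM : AssumptionQM Khat Kcheck) (hh : 0 < h) : Monotone fun t => KDE d n K x h (y t) := by
  refine monotone_nat_of_le_succ fun t => ?_
  have hstep := hy.mul_norm_sub_sq_le hK hQM hh (fcheck_nonneg hQM hh (y t))
  rwa [zero_div, zero_mul, sub_nonneg] at hstep

lemma fcheck_pos_of_ne (hy : MSSeq d n Kcheck x h y) (hQM : AssumptionQM Khat Kcheck)
    (hh : 0 < h) {t : ℕ} (hne : y (t + 1) ≠ y t) : 0 < fcheck d n Kcheck x h (y t) := by
  refine (fcheck_nonneg hQM hh (y t)).lt_of_ne' fun hzero => hne ?_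
  rw [hy t, msMap_of_fcheck_eq_zero hzero, add_zero]

lemma KDE_lt_of_ne (hy : MSSeq d n Kcheck x h y) (hK : ∀ v, K v = Khat (‖v‖ ^ 2 / 2))
    (hQM : AssumptionQM Khat Kcheck) (hh : 0 < h) {t : ℕ} (hne : y (t + 1) ≠ y t) :
    KDE d n K x h (y t) < KDE d n K x h (y (t + 1)) := by
  have hpos := hy.fcheck_pos_of_ne hQM hh hne
  have hnorm : 0 < ‖y (t + 1) - y t‖ := norm_sub_pos_iff.2 hne
  refine sub_pos.1 (lt_of_lt_of_le ?_ (hy.mul_norm_sub_sq_le hK hQM hh le_rfl))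
  positivity

theorem exists_pos_le_fcheck (hy : MSSeq d n Kcheck x h y) (hn : 0 < n)
    (hK : ∀ v, K v = Khat (‖v‖ ^ 2 / 2)) (hQM : AssumptionQM Khat Kcheck) (hh : 0 < h)
    (h01 : y 1 ≠ y 0) : ∃ c : ℝ, 0 < c ∧ ∀ t, c ≤ fcheck d n Kcheck x h (y t) := by
  let δ : ℝ := KDE d n K x h (y 1) - KDE d n K x h (y 0)
  let V : ℝ := (∑ i, halfSqDist h (x i) (y 0)) / n
  have hδ : 0 < δ := sub_pos.2 (hy.KDE_lt_of_ne hK hQM hh h01)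
  have hδV (t : ℕ) : δ ≤ fcheck d n Kcheck x h (y (t + 1)) * V :=
    (sub_le_sub_right (hy.monotone_KDE hK hQM hh (Nat.le_add_left 1 t)) _).trans
      (KDE_sub_KDE_le_fcheck_mul hn hK hQM hh _ _)
  have hV : 0 < V :=
    pos_of_mul_pos_right (hδ.trans_le (hδV 0)) (fcheck_nonneg hQM hh _)
  refine ⟨min (fcheck d n Kcheck x h (y 0)) (δ / V),
    lt_min (hy.fcheck_pos_of_ne hQM hh h01) (div_pos hδ hV), fun t => ?_⟩
  cases t with
  | zero => exact min_le_left _ _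
  | succ t => exact (min_le_right _ _).trans ((div_le_iff₀ hV).2 (hδV t))

end MSSeq

end MeanShift

theorem ms_sufficient_increase_general {d n : ℕ} (hn : 0 < n)
    {K : Euc d → ℝ} {Khat Kcheck : ℝ → ℝ}
    (hK : ∀ v, K v = Khat (‖v‖ ^ 2 / 2)) (hQM : AssumptionQM Khat Kcheck)
    {x : Fin n → Euc d} {h : ℝ} (hh : 0 < h)
    {y : ℕ → Euc d} (hy : MSSeq d n Kcheck x h y) :
    (∃ abar : ℝ, 0 < abar ∧ ∀ t : ℕ,
        abar * ‖y (t + 1) - y t‖ ^ 2 ≤ KDE d n K x h (y (t + 1)) - KDE d n K x h (y t)) ∧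
    ∀ C : ℝ, (∀ t : ℕ, C / ((n : ℝ) * h ^ d) ≤ fcheck d n Kcheck x h (y t)) →
      ∀ t : ℕ,
        C / (2 * (n : ℝ) * h ^ (d + 2)) * ‖y (t + 1) - y t‖ ^ 2 ≤
          KDE d n K x h (y (t + 1)) - KDE d n K x h (y t) := by
  constructor
  · by_cases h01 : y 1 = y 0
    · exact ⟨1, one_pos, fun t => by simp [hy.apply_eq_apply_zero h01]⟩
    · obtain ⟨c, hc_pos, hc⟩ := hy.exists_pos_le_fcheck hn hK hQM hh h01
      exact ⟨c / (2 * h ^ 2), by positivity, fun t => hy.mul_norm_sub_sq_le hK hQM hh (hc t)⟩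
  · intro C hC t
    have hconst : C / (2 * (n : ℝ) * h ^ (d + 2)) = C / (n * h ^ d) / (2 * h ^ 2) := by ring
    rw [hconst]
    exact hy.mul_norm_sub_sq_le hK hQM hh (hC t)

/-- Under Assumptions RS and QM, starting from `y 0` with `f (y 0) > 0`, there is
`ā > 0` with the sufficient-increase condition `f(y_{t+1}) − f(y_t) ≥ ā‖y_{t+1} − y_t‖²` for all
`t`; moreover one can take `ā = C/(2 n h^{d+2})` for any `C > 0` with `f̌(y_t) ≥ C/(n hᵈ)` for
all `t`. -/
theorem ms_sufficient_increase
    (d n : ℕ) (hd : 0 < d) (hn : 0 < n)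
    (K : Euc d → ℝ) (Khat Kcheck : ℝ → ℝ)
    (hRS : AssumptionRS d K Khat) (hQM : AssumptionQM Khat Kcheck)
    (x : Fin n → Euc d) (h : ℝ) (hh : 0 < h)
    (y : ℕ → Euc d) (hy : MSSeq d n Kcheck x h y)
    (hy0 : 0 < KDE d n K x h (y 0)) :
    (∃ abar : ℝ, 0 < abar ∧ ∀ t : ℕ,
        abar * ‖y (t + 1) - y t‖ ^ 2 ≤ KDE d n K x h (y (t + 1)) - KDE d n K x h (y t)) ∧
    ∀ C : ℝ, 0 < C → (∀ t : ℕ, C / ((n : ℝ) * h ^ d) ≤ fcheck d n Kcheck x h (y t)) →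
      ∀ t : ℕ,
        C / (2 * (n : ℝ) * h ^ (d + 2)) * ‖y (t + 1) - y t‖ ^ 2 ≤
          KDE d n K x h (y (t + 1)) - KDE d n K x h (y t) := by
  obtain ⟨hexists, hconst⟩ := ms_sufficient_increase_general hn hRS.radial hQM hh hy
  exact ⟨hexists, fun C _ => hconst C⟩
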